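/- The family of elements [a_1 … a_p] indexed by strictly increasing tuples 1 ≤ a_1 < a_2 < ⋯ < a_p ≤ 2n (including the empty tuple, giving 1) is a basis of the ℚ-vector space Ω; in particular dim_ℚ Ω = 2^{2n}. -/

import Mathlib

open scoped BigOperators TensorProduct
open Nat

noncomputable section

/-- The symplectic metric `g` of `osp(1|2n)` (0-indexed). -/
def gmat (n : ℕ) (a b : Fin (2*n)) : ℚ :=
  if (a:ℕ) < n ∧ (b:ℕ) = (a:ℕ) + n then -1
  else if (b:ℕ) < n ∧ (a:ℕ) = (b:ℕ) + n then 1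
  else 0

/-- The defining relations of `U(osp(1|2n))`:
`(σₐσ_b + σ_bσₐ)σ_c - σ_c(σₐσ_b + σ_bσₐ) = -g_{ac} σ_b - g_{bc} σₐ`. -/
inductive OspRel (n : ℕ) : FreeAlgebra ℚ (Fin (2*n)) → FreeAlgebra ℚ (Fin (2*n)) → Prop
  | rel (a b c : Fin (2*n)) : OspRel n
      ((FreeAlgebra.ι ℚ a * FreeAlgebra.ι ℚ b + FreeAlgebra.ι ℚ b * FreeAlgebra.ι ℚ a)
          * FreeAlgebra.ι ℚ c)
      (FreeAlgebra.ι ℚ c *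
          (FreeAlgebra.ι ℚ a * FreeAlgebra.ι ℚ b + FreeAlgebra.ι ℚ b * FreeAlgebra.ι ℚ a)
        - algebraMap ℚ (FreeAlgebra ℚ (Fin (2*n))) (gmat n a c) * FreeAlgebra.ι ℚ b
        - algebraMap ℚ (FreeAlgebra ℚ (Fin (2*n))) (gmat n b c) * FreeAlgebra.ι ℚ a)

/-- The universal enveloping superalgebra `U(osp(1|2n))`. -/
abbrev U (n : ℕ) := RingQuot (OspRel n)

/-- The fermionic generators `σₐ`. -/
def σ (n : ℕ) (a : Fin (2*n)) : U n :=
  RingQuot.mkAlgHom ℚ (OspRel n) (FreeAlgebra.ι ℚ a)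

/-- The bosonic generators `σ_{ab} = σₐσ_b + σ_bσₐ`. -/
def σσ (n : ℕ) (a b : Fin (2*n)) : U n := σ n a * σ n b + σ n b * σ n a

/-- The antisymmetrized monomial `[a₁ … a_p]`. -/
def brkt (n : ℕ) (p : ℕ) (a : Fin p → Fin (2*n)) : U n :=
  ∑ s : Equiv.Perm (Fin p),
    (Equiv.Perm.sign s : ℤ) • (List.ofFn fun i => σ n (a (s i))).prod

/-- `Ω`, the span of all the antisymmetrized monomials. -/
def Omega (n : ℕ) : Submodule ℚ (U n) :=
  Submodule.span ℚ {x | ∃ p, ∃ a : Fin p → Fin (2*n), x = brkt n p a}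

section

variable {A ι : Type*} [Ring A] [Algebra ℚ A] {g : ι → ι → ℚ} {E I : ι → A} {N : A}

theorem anticommutator_eq (hg : ∀ a b, g a b = - g b a)
    (hE : ∀ a b, E a * E b = - (E b * E a)) (hI : ∀ a b, I a * I b = - (I b * I a))
    (hIE : ∀ a b, I a * E b = algebraMap ℚ A (g a b) - E b * I a)
    (hNE : ∀ a, N * E a = E a * N + E a) (hNI : ∀ a, N * I a = I a * N - I a) (a b : ι) :
    (E a + I a * N) * (E b + I b * N) + (E b + I b * N) * (E a + I a * N) =
      - (E a * I b + E b * I a) := by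
  have hab : algebraMap ℚ A (g a b) = - algebraMap ℚ A (g b a) := by rw [hg, map_neg]
  linear_combination (norm := noncomm_ring) hE a b + hI a b * N * N - hI a b * N +
    I a * hNE b + I b * hNE a + hIE a b * N + hIE b a * N + hIE a b + hIE b a +
    I a * hNI b * N + I b * hNI a * N + hab * N + hab

theorem anticommutator_mul_eq (hg : ∀ a b, g a b = - g b a)
    (hE : ∀ a b, E a * E b = - (E b * E a)) (hI : ∀ a b, I a * I b = - (I b * I a))
    (hIE : ∀ a b, I a * E b = algebraMap ℚ A (g a b) - E b * I a)
    (hNE : ∀ a, N * E a = E a * N + E a) (hNI : ∀ a, N * I a = I a * N - I a) (a b c : ι) :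
    ((E a + I a * N) * (E b + I b * N) + (E b + I b * N) * (E a + I a * N)) * (E c + I c * N) =
      (E c + I c * N) * ((E a + I a * N) * (E b + I b * N) + (E b + I b * N) * (E a + I a * N))
      - algebraMap ℚ A (g a c) * (E b + I b * N) - algebraMap ℚ A (g b c) * (E a + I a * N) := by
  have hca : algebraMap ℚ A (g c a) = - algebraMap ℚ A (g a c) := by rw [hg, map_neg]
  have hcb : algebraMap ℚ A (g c b) = - algebraMap ℚ A (g b c) := by rw [hg, map_neg]
  have key (a b : ι) (hca : algebraMap ℚ A (g c a) = - algebraMap ℚ A (g a c)) :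
      E a * I b * (E c + I c * N) = (E c + I c * N) * (E a * I b) +
        algebraMap ℚ A (g b c) * E a + algebraMap ℚ A (g a c) * (I b * N) := by
    linear_combination (norm := noncomm_ring) E a * hIE b c - Algebra.commutes (g b c) (E a)
      - hE a c * I b - I c * hNE a * I b - I c * E a * hNI b - hIE c a * I b * N - hca * I b * N
      + E a * hI c b * N
  rw [anticommutator_eq hg hE hI hIE hNE hNI]
  linear_combination (norm := noncomm_ring) - key a b hca - key b a hcb

theorem sum_mul_mul_eq_mul_sum_add [Fintype ι] [DecidableEq ι] {C : ι → A}
    (hE : ∀ a b, E a * E b = - (E b * E a))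
    (hC : ∀ i a, C i * E a = algebraMap ℚ A (if i = a then 1 else 0) - E a * C i) (a : ι) :
    (∑ i, E i * C i) * E a = E a * ∑ i, E i * C i + E a := by
  have h (i : ι) : E i * C i * E a = E a * (E i * C i) + if i = a then E i else 0 := by
    have hi : E i * algebraMap ℚ A (if i = a then 1 else 0) = if i = a then E i else 0 := by
      split_ifs <;> simp
    linear_combination (norm := noncomm_ring) E i * hC i a - hE i a * C i + hi
  simp [Finset.sum_mul, Finset.mul_sum, h, Finset.sum_add_distrib]

theorem sum_mul_mul_eq_mul_sum_sub [Fintype ι] {C : ι → A} {D : A} {d : ι → ℚ}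
    (hC : ∀ i, C i * D = - (D * C i)) (hD : ∀ i, D * E i = algebraMap ℚ A (d i) - E i * D) :
    (∑ i, E i * C i) * D = D * ∑ i, E i * C i - ∑ i, algebraMap ℚ A (d i) * C i := by
  have h (i : ι) : E i * C i * D = D * (E i * C i) - algebraMap ℚ A (d i) * C i := by
    linear_combination (norm := noncomm_ring) E i * hC i - hD i * C i
  simp [Finset.sum_mul, Finset.mul_sum, h]

end

theorem gmat_antisymm (n : ℕ) (a b : Fin (2*n)) : gmat n a b = - gmat n b a := by
  unfold gmat
  split_ifs <;> first | omega | norm_num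

/-- The exterior algebra of `ℚ^{2n}`, the carrier of a representation of `U n`. -/
abbrev ExtAlg (n : ℕ) := ExteriorAlgebra ℚ (Fin (2*n) → ℚ)

/-- The degree one element of `ExtAlg n` given by the `a`-th standard basis vector. -/
def extVec (n : ℕ) (a : Fin (2*n)) : ExtAlg n := ExteriorAlgebra.ι ℚ (Pi.single a 1)

/-- Left multiplication by the `a`-th basis vector. -/
def creation (n : ℕ) (a : Fin (2*n)) : Module.End ℚ (ExtAlg n) := LinearMap.mulLeft ℚ (extVec n a)

/-- Contraction with a linear form. -/
def contraction (n : ℕ) (d : Module.Dual ℚ (Fin (2*n) → ℚ)) : Module.End ℚ (ExtAlg n) :=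
  CliffordAlgebra.contractLeft d

/-- The linear form `g(a, ·)`. -/
def gform (n : ℕ) (a : Fin (2*n)) : Module.Dual ℚ (Fin (2*n) → ℚ) :=
  ∑ i, gmat n a i • LinearMap.proj i

/-- The degree operator. -/
def degreeOp (n : ℕ) : Module.End ℚ (ExtAlg n) :=
  ∑ i, creation n i * contraction n (LinearMap.proj i)

section

variable {n : ℕ}

theorem contraction_extVec_mul (d : Module.Dual ℚ (Fin (2*n) → ℚ)) (a : Fin (2*n)) (x : ExtAlg n) :
    contraction n d (extVec n a * x) =
      d (Pi.single a 1) • x - extVec n a * contraction n d x :=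
  CliffordAlgebra.contractLeft_ι_mul d _ x

theorem contraction_one (d : Module.Dual ℚ (Fin (2*n) → ℚ)) : contraction n d 1 = 0 :=
  CliffordAlgebra.contractLeft_one _ _

theorem contraction_mul_contraction (d d' : Module.Dual ℚ (Fin (2*n) → ℚ)) :
    contraction n d * contraction n d' = - (contraction n d' * contraction n d) :=
  LinearMap.ext fun x => CliffordAlgebra.contractLeft_comm d d' x

theorem contraction_mul_creation (d : Module.Dual ℚ (Fin (2*n) → ℚ)) (a : Fin (2*n)) :
    contraction n d * creation n a =
      algebraMap ℚ _ (d (Pi.single a 1)) - creation n a * contraction n d :=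
  LinearMap.ext fun x => contraction_extVec_mul d a x

theorem creation_mul_creation (a b : Fin (2*n)) :
    creation n a * creation n b = - (creation n b * creation n a) := by
  refine LinearMap.ext fun x => ?_
  have h : extVec n a * extVec n b = - (extVec n b * extVec n a) :=
    eq_neg_of_add_eq_zero_left (ExteriorAlgebra.ι_add_mul_swap _ _)
  simp [creation, ← mul_assoc, h]

theorem gform_single (a b : Fin (2*n)) : gform n a (Pi.single b 1) = gmat n a b := by
  simp [gform, Pi.single_apply]

theorem contraction_gform (a : Fin (2*n)) :
    contraction n (gform n a) = ∑ i, gmat n a i • contraction n (LinearMap.proj i) := by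
  simp [contraction, gform]

theorem degreeOp_mul_creation (a : Fin (2*n)) :
    degreeOp n * creation n a = creation n a * degreeOp n + creation n a :=
  sum_mul_mul_eq_mul_sum_add creation_mul_creation
    (fun i a => by
      rw [contraction_mul_creation, LinearMap.proj_apply, Pi.single_apply]) a

theorem degreeOp_mul_contraction (a : Fin (2*n)) :
    degreeOp n * contraction n (gform n a) =
      contraction n (gform n a) * degreeOp n - contraction n (gform n a) := by
  have h := sum_mul_mul_eq_mul_sum_sub (E := creation n)
    (C := fun i => contraction n (LinearMap.proj i))
    (fun i => contraction_mul_contraction _ _) (fun i => contraction_mul_creation (gform n a) i)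
  simp only [gform_single, ← Algebra.smul_def] at h
  rwa [← contraction_gform] at h

end

/-- The operator by which `σ n a` acts on `ExtAlg n`. -/
def sigmaOp (n : ℕ) (a : Fin (2*n)) : Module.End ℚ (ExtAlg n) :=
  creation n a + contraction n (gform n a) * degreeOp n

/-- The representation of `U n` on the exterior algebra. -/
def extRep (n : ℕ) : U n →ₐ[ℚ] Module.End ℚ (ExtAlg n) :=
  RingQuot.liftAlgHom ℚ ⟨FreeAlgebra.lift ℚ (sigmaOp n), by
    rintro _ _ ⟨a, b, c⟩
    simp only [map_mul, map_add, map_sub, FreeAlgebra.lift_ι_apply, AlgHom.commutes]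
    exact anticommutator_mul_eq (gmat_antisymm n) creation_mul_creation
      (fun a b => contraction_mul_contraction _ _)
      (fun a b => by rw [contraction_mul_creation, gform_single])
      degreeOp_mul_creation degreeOp_mul_contraction a b c⟩

theorem extRep_σ (n : ℕ) (a : Fin (2*n)) : extRep n (σ n a) = sigmaOp n a := by
  simp [extRep, σ]

/-- The span of the products of fewer than `k` basis vectors. -/
def degreeLT (n k : ℕ) : Submodule ℚ (ExtAlg n) :=
  Submodule.span ℚ {x | ∃ l : List (Fin (2*n)), l.length < k ∧ x = (l.map (extVec n)).prod}

section

variable {n : ℕ}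

theorem list_prod_mem_degreeLT {k : ℕ} {l : List (Fin (2*n))} (h : l.length < k) :
    (l.map (extVec n)).prod ∈ degreeLT n k :=
  Submodule.subset_span ⟨l, h, rfl⟩

theorem degreeLT_mono {j k : ℕ} (h : j ≤ k) : degreeLT n j ≤ degreeLT n k :=
  Submodule.span_mono fun _ ⟨l, hl, hx⟩ => ⟨l, hl.trans_le h, hx⟩

theorem extVec_mul_mem_degreeLT {k : ℕ} (a : Fin (2*n)) {x : ExtAlg n} (hx : x ∈ degreeLT n k) :
    extVec n a * x ∈ degreeLT n (k + 1) := by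
  suffices h : degreeLT n k ≤ (degreeLT n (k + 1)).comap (creation n a) from h hx
  refine Submodule.span_le.2 ?_
  rintro _ ⟨l, hl, rfl⟩
  simpa [creation] using list_prod_mem_degreeLT (l := a :: l) (Nat.succ_lt_succ hl)

theorem contraction_mem_degreeLT {k : ℕ} (d : Module.Dual ℚ (Fin (2*n) → ℚ)) {x : ExtAlg n}
    (hx : x ∈ degreeLT n (k + 1)) : contraction n d x ∈ degreeLT n k := by
  suffices h : degreeLT n (k + 1) ≤ (degreeLT n k).comap (contraction n d) from h hx
  refine Submodule.span_le.2 ?_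
  rintro _ ⟨l, hl, rfl⟩
  have key : ∀ l : List (Fin (2*n)),
      contraction n d (l.map (extVec n)).prod ∈ degreeLT n l.length := by
    intro l
    induction l with
    | nil => simp [contraction_one]
    | cons a l ih =>
      rw [List.map_cons, List.prod_cons, contraction_extVec_mul]
      exact sub_mem (Submodule.smul_mem _ _ (list_prod_mem_degreeLT (Nat.lt_succ_self _)))
        (extVec_mul_mem_degreeLT a ih)
  exact degreeLT_mono (Nat.le_of_lt_succ hl) (key l)

theorem degreeOp_mem_degreeLT {k : ℕ} {x : ExtAlg n} (hx : x ∈ degreeLT n (k + 1)) :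
    degreeOp n x ∈ degreeLT n (k + 1) := by
  rw [degreeOp, LinearMap.sum_apply]
  exact sum_mem fun i _ => extVec_mul_mem_degreeLT i (contraction_mem_degreeLT _ hx)

theorem extRep_list_prod_sub_mem (l : List (Fin (2*n))) :
    extRep n (l.map (σ n)).prod 1 - (l.map (extVec n)).prod ∈ degreeLT n l.length := by
  induction l with
  | nil => simp
  | cons a l ih =>
    have h : extRep n (l.map (σ n)).prod 1 ∈ degreeLT n (l.length + 1) := by
      have := add_mem (degreeLT_mono l.length.le_succ ih)
        (list_prod_mem_degreeLT (Nat.lt_succ_self l.length))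
      rwa [sub_add_cancel] at this
    have h' := add_mem (extVec_mul_mem_degreeLT a ih)
      (degreeLT_mono l.length.le_succ
        (contraction_mem_degreeLT (gform n a) (degreeOp_mem_degreeLT h)))
    have hx : extRep n ((a :: l).map (σ n)).prod 1 =
        extVec n a * extRep n (l.map (σ n)).prod 1 +
          contraction n (gform n a) (degreeOp n (extRep n (l.map (σ n)).prod 1)) := by
      rw [List.map_cons, List.prod_cons, map_mul, extRep_σ]
      rfl
    rw [hx, List.map_cons, List.prod_cons, add_sub_right_comm, ← mul_sub]
    exact h'

/-- The antisymmetrized product, as an alternating map on the space of generators. -/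
def brktAlt (n p : ℕ) : (Fin (2*n) → ℚ) [⋀^Fin p]→ₗ[ℚ] U n :=
  MultilinearMap.alternatization
    ((MultilinearMap.mkPiAlgebraFin ℚ p (U n)).compLinearMap
      fun _ => Fintype.linearCombination ℚ (σ n))

theorem brkt_eq_brktAlt {p : ℕ} (a : Fin p → Fin (2*n)) :
    brkt n p a = brktAlt n p (fun i => Pi.single (a i) 1) := by
  simp [brkt, brktAlt, MultilinearMap.alternatization_apply, Units.smul_def,
    Fintype.linearCombination_apply_single]

theorem brkt_mem_span {p : ℕ} (a : Fin p → Fin (2*n)) :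
    brkt n p a ∈ Submodule.span ℚ (Set.range (fun S : Finset (Fin (2*n)) =>
      brkt n S.card (fun i => S.orderEmbOfFin rfl i))) := by
  by_cases ha : Function.Injective a
  · have hcard : (Finset.univ.image a).card = p := by
      rw [Finset.card_image_of_injective _ ha, Finset.card_fin]
    generalize hS : Finset.univ.image a = S at hcard
    subst hcard
    let e : Fin S.card ≃ S := Equiv.ofBijective
      (fun i => ⟨a i, hS ▸ Finset.mem_image_of_mem a (Finset.mem_univ i)⟩)
      ((Fintype.bijective_iff_injective_and_card _).2
        ⟨fun i j h => ha (congrArg Subtype.val h), by simp⟩)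
    let s : Equiv.Perm (Fin S.card) := e.trans (S.orderIsoOfFin rfl).symm.toEquiv
    have hs (i : Fin S.card) : S.orderEmbOfFin rfl (s i) = a i := by
      rw [← Finset.coe_orderIsoOfFin_apply]
      simp [s, e]
    have h : brkt n S.card a =
        Equiv.Perm.sign s • brkt n S.card (fun i => S.orderEmbOfFin rfl i) := by
      rw [brkt_eq_brktAlt, brkt_eq_brktAlt, ← AlternatingMap.map_perm]
      simp [Function.comp_def, hs]
    rw [h, Units.smul_def]
    exact zsmul_mem (Submodule.subset_span (Set.mem_range_self S)) _
  · rw [brkt_eq_brktAlt, AlternatingMap.map_eq_zero_of_not_injective]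
    · exact zero_mem _
    · exact fun h => ha fun i j hij => h (by simp only [hij])

theorem span_brkt_eq_Omega (n : ℕ) :
    Submodule.span ℚ (Set.range (fun S : Finset (Fin (2*n)) =>
      brkt n S.card (fun i => S.orderEmbOfFin rfl i))) = Omega n := by
  apply le_antisymm
  · refine Submodule.span_mono ?_
    rintro _ ⟨S, rfl⟩
    exact ⟨_, _, rfl⟩
  · refine Submodule.span_le.2 ?_
    rintro _ ⟨p, a, rfl⟩
    exact brkt_mem_span a

end

/-- The action of `U n` on the unit of the exterior algebra. -/
def extSymbol (n : ℕ) : U n →ₗ[ℚ] ExtAlg n :=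
  LinearMap.applyₗ (1 : ExtAlg n) ∘ₗ (extRep n).toLinearMap

section

variable {n : ℕ}

theorem extSymbol_brkt_sub_mem {p : ℕ} (a : Fin p → Fin (2*n)) :
    extSymbol n (brkt n p a) - (p ! : ℚ) • (List.ofFn fun i => extVec n (a i)).prod ∈
      degreeLT n p := by
  have hperm (s : Equiv.Perm (Fin p)) : (List.ofFn fun i => extVec n (a i)).prod =
      (Equiv.Perm.sign s : ℤ) • (List.ofFn fun i => extVec n (a (s i))).prod := by
    have h := (ExteriorAlgebra.ιMulti ℚ p).map_perm (fun i => (Pi.single (a i) 1 : Fin (2*n) → ℚ)) s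
    simp only [ExteriorAlgebra.ιMulti_apply, Function.comp_def] at h
    simp only [extVec, h, Units.smul_def, smul_smul]
    simp
  have hsum : (p ! : ℚ) • (List.ofFn fun i => extVec n (a i)).prod =
      ∑ s : Equiv.Perm (Fin p),
        (Equiv.Perm.sign s : ℤ) • (List.ofFn fun i => extVec n (a (s i))).prod := by
    rw [← Finset.sum_congr rfl fun s _ => hperm s]
    simp [Fintype.card_perm, Nat.cast_smul_eq_nsmul]
  rw [hsum, brkt, map_sum, ← Finset.sum_sub_distrib]
  refine sum_mem fun s _ => ?_
  rw [map_zsmul, ← smul_sub]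
  refine zsmul_mem ?_ _
  have h := extRep_list_prod_sub_mem (List.ofFn fun i => a (s i))
  simpa [List.map_ofFn, Function.comp_def, extSymbol] using h

theorem degreeLT_le_map_Omega (k : ℕ) : degreeLT n k ≤ (Omega n).map (extSymbol n) := by
  induction k with
  | zero =>
    refine Submodule.span_le.2 ?_
    rintro _ ⟨l, hl, rfl⟩
    exact absurd hl (Nat.not_lt_zero _)
  | succ k ih =>
    refine Submodule.span_le.2 ?_
    rintro _ ⟨l, hl, rfl⟩
    have h₁ := ih (degreeLT_mono (Nat.le_of_lt_succ hl) (extSymbol_brkt_sub_mem l.get))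
    have h₂ : extSymbol n (brkt n l.length l.get) ∈ (Omega n).map (extSymbol n) :=
      Submodule.mem_map_of_mem (Submodule.subset_span ⟨_, _, rfl⟩)
    have h₃ := Submodule.smul_mem _ ((l.length ! : ℚ)⁻¹) (sub_mem h₂ h₁)
    rw [sub_sub_cancel, inv_smul_smul₀ (by exact_mod_cast Nat.factorial_ne_zero _)] at h₃
    have hl' : (List.ofFn fun i => extVec n (l.get i)) = l.map (extVec n) := by
      rw [← Function.comp_def, ← List.map_ofFn, List.ofFn_get]
    rwa [hl'] at h₃

theorem map_extSymbol_Omega : (Omega n).map (extSymbol n) = ⊤ := by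
  let b := (Pi.basisFun ℚ (Fin (2*n))).ExteriorAlgebra
  refine top_unique (b.span_eq.ge.trans (Submodule.span_le.2 ?_))
  rintro _ ⟨S, rfl⟩
  refine degreeLT_le_map_Omega (S.card + 1) ?_
  refine Submodule.subset_span ⟨List.ofFn fun i => S.orderEmbOfFin rfl i, by simp, ?_⟩
  rw [ExteriorAlgebra.basis_apply, List.map_ofFn]
  simp [ExteriorAlgebra.ιMulti_family, ExteriorAlgebra.ιMulti_apply, Function.comp_def, extVec]
  rfl

theorem linearIndependent_brkt (n : ℕ) :
    LinearIndependent ℚ (fun S : Finset (Fin (2*n)) =>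
      brkt n S.card (fun i => S.orderEmbOfFin rfl i)) := by
  refine LinearIndependent.of_comp (extSymbol n)
    (linearIndependent_of_top_le_span_of_card_eq_finrank ?_ ?_)
  · rw [Set.range_comp, ← Submodule.map_span, span_brkt_eq_Omega, map_extSymbol_Omega]
  · exact (Module.finrank_eq_card_basis (Pi.basisFun ℚ (Fin (2*n))).ExteriorAlgebra).symm

end

/-- The family of elements `[a₁ … a_p]` indexed by strictly increasing tuples
`a₁ < … < a_p` (equivalently, by subsets `S ⊆ {1,…,2n}`, via their increasing enumeration,
the empty set giving `1`) is linearly independent, spans `Ω`, and `dim_ℚ Ω = 2^{2n}`. -/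
theorem stmt17 (n : ℕ) (hn : 1 ≤ n) :
    LinearIndependent ℚ (fun S : Finset (Fin (2*n)) =>
      brkt n S.card (fun i => S.orderEmbOfFin rfl i)) ∧
    Submodule.span ℚ (Set.range (fun S : Finset (Fin (2*n)) =>
      brkt n S.card (fun i => S.orderEmbOfFin rfl i))) = Omega n ∧
    Module.finrank ℚ (Omega n) = 2^(2*n) := by
  refine ⟨linearIndependent_brkt n, span_brkt_eq_Omega n, ?_⟩
  rw [← span_brkt_eq_Omega, finrank_span_eq_card (linearIndependent_brkt n)]
  simp

end
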